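/- Let 2 ≤ k ≤ t ≤ n and let G be a k-graph on n vertices with minimum codegree δ(G) > f_k(t)·n. Then K_t(G) is tight-connected: for any two edges e, f of K_t(G) there is a finite sequence e = e_0, e_1, …, e_m = f of edges of K_t(G) such that |e_i ∩ e_{i+1}| ≥ t−1 for every 0 ≤ i < m. -/

import Mathlib

/-- `X` is an edge of the clique `j`-graph `K_j(G)` of the `k`-graph with edge set `E`:
`X` has `j` vertices and every `k`-element subset of `X` is an edge. -/
def cliqueEdge {V : Type*} [DecidableEq V] (E : Finset (Finset V)) (k j : ℕ)
    (X : Finset V) : Prop :=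
  X.card = j ∧ ∀ S ⊆ X, S.card = k → S ∈ E

def stepRel {V : Type*} [DecidableEq V] (E : Finset (Finset V)) (k j : ℕ)
    (A B : Finset V) : Prop :=
  cliqueEdge E k j A ∧ cliqueEdge E k j B ∧ j - 1 ≤ (A ∩ B).card

/-- Each (k-1)-set has few non-neighbours. -/
lemma bad_card {V : Type*} [Fintype V] [DecidableEq V] (k : ℕ) (hk : 2 ≤ k)
    (E : Finset (Finset V)) (hE : ∀ e ∈ E, e.card = k) (D : Finset V) (hD : D.card = k - 1) :
    (E.filter (fun e => D ⊆ e)).card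
      + (Finset.univ.filter (fun v => insert v D ∉ E)).card ≤ Fintype.card V := by
  have h1 : E.filter (fun e => D ⊆ e) ⊆
      (Finset.univ.filter (fun v => insert v D ∈ E)).image (fun v => insert v D) := by
    intro e he
    rw [Finset.mem_filter] at he
    obtain ⟨heE, hDe⟩ := he
    have hc := hE e heE
    have h2 : (e \ D).card = 1 := by
      rw [Finset.card_sdiff_of_subset hDe]; omega
    obtain ⟨v, hv⟩ := Finset.card_eq_one.mp h2
    have h3 : insert v D = e := by
      rw [Finset.insert_eq, ← hv, Finset.sdiff_union_of_subset hDe]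
    rw [Finset.mem_image]
    refine ⟨v, ?_, h3⟩
    simp [h3, heE]
  have h2 := (Finset.card_le_card h1).trans Finset.card_image_le
  have h3 := Finset.card_filter_add_card_filter_not (s := (Finset.univ : Finset V))
    (fun v => insert v D ∈ E)
  rw [Finset.card_univ] at h3
  omega

lemma exists_ext {V : Type*} [Fintype V] [DecidableEq V] (n k t : ℕ)
    (hk : 2 ≤ k) (hkt : k ≤ t) (htn : t ≤ n) (hn : Fintype.card V = n)
    (E : Finset (Finset V)) (hE : ∀ e ∈ E, e.card = k)
    (hdeg : ∀ D : Finset V, D.card = k - 1 →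
      (1 - 1 / (((t-1).choose (k-1) : ℝ) + ((t-2).choose (k-2) : ℝ))) * n
        < ((E.filter (fun e => D ⊆ e)).card : ℝ))
    (F : Finset (Finset V)) (hF : ∀ D ∈ F, D.card = k - 1)
    (hFc : F.card ≤ (t-1).choose (k-1) + (t-2).choose (k-2)) :
    ∃ v, ∀ D ∈ F, insert v D ∈ E := by
  by_contra hcon
  push Not at hcon
  have hsub : (Finset.univ : Finset V) ⊆
      F.biUnion (fun D => Finset.univ.filter (fun v => insert v D ∉ E)) := by
    intro v _
    obtain ⟨D, hD, hv⟩ := hcon v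
    simp only [Finset.mem_biUnion, Finset.mem_filter, Finset.mem_univ, true_and]
    exact ⟨D, hD, hv⟩
  have h1 := (Finset.card_le_card hsub).trans Finset.card_biUnion_le
  rw [Finset.card_univ, hn] at h1
  have hMpos : 0 < (t-1).choose (k-1) := Nat.choose_pos (by omega)
  have hFne : F.Nonempty := by
    have : 0 < Fintype.card V := by omega
    obtain ⟨v⟩ := Fintype.card_pos_iff.mp this
    obtain ⟨D, hD, _⟩ := hcon v
    exact ⟨D, hD⟩
  set M : ℝ := ((t-1).choose (k-1) : ℝ) + ((t-2).choose (k-2) : ℝ) with hM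
  have hM0 : 0 < M := by
    have : (0:ℝ) < ((t-1).choose (k-1) : ℝ) := by exact_mod_cast hMpos
    positivity
  have h2 : ∀ D ∈ F, ((Finset.univ.filter (fun v => insert v D ∉ E)).card : ℝ) < n / M := by
    intro D hD
    have a := bad_card k hk E hE D (hF D hD)
    have b := hdeg D (hF D hD)
    rw [hn] at a
    have a' : ((E.filter (fun e => D ⊆ e)).card : ℝ)
      + ((Finset.univ.filter (fun v => insert v D ∉ E)).card : ℝ) ≤ n := by exact_mod_cast a
    have c : (1 - 1 / M) * n = n - n / M := by ring
    rw [c] at b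
    linarith
  have h3 := Finset.sum_lt_sum_of_nonempty hFne h2
  rw [Finset.sum_const, nsmul_eq_mul] at h3
  have h4 : (n : ℝ) ≤ ∑ D ∈ F, ((Finset.univ.filter (fun v => insert v D ∉ E)).card : ℝ) := by
    exact_mod_cast h1
  have h5 : (F.card : ℝ) ≤ M := by rw [hM]; exact_mod_cast hFc
  have h6 : (F.card : ℝ) * (n / M) ≤ M * (n / M) := by gcongr
  have h7 : M * (n / M) = n := by field_simp
  linarith

lemma clique_insert {V : Type*} [DecidableEq V] (k j : ℕ) (hk : 2 ≤ k)
    (E : Finset (Finset V)) (A : Finset V) (hA : cliqueEdge E k j A) (v : V) (hv : v ∉ A)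
    (h : ∀ D ∈ A.powersetCard (k-1), insert v D ∈ E) : cliqueEdge E k (j+1) (insert v A) := by
  refine ⟨by rw [Finset.card_insert_of_notMem hv, hA.1], ?_⟩
  intro S hS hSc
  by_cases hvS : v ∈ S
  · have := h (S.erase v) (by
      rw [Finset.mem_powersetCard]
      refine ⟨?_, by rw [Finset.card_erase_of_mem hvS, hSc]⟩
      rwa [← Finset.subset_insert_iff])
    rwa [Finset.insert_erase hvS] at this
  · exact hA.2 S ((Finset.subset_insert_iff_of_notMem hvS).mp hS) hSc

lemma notMem_of_ext {V : Type*} [DecidableEq V] (k j : ℕ) (hk : 2 ≤ k) (hj : k - 1 ≤ j)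
    (E : Finset (Finset V)) (hE : ∀ e ∈ E, e.card = k) (A : Finset V) (hA : A.card = j) (v : V)
    (h : ∀ D ∈ A.powersetCard (k-1), insert v D ∈ E) : v ∉ A := by
  intro hv
  obtain ⟨D, h1, h2, h3⟩ := Finset.exists_subsuperset_card_eq (s := {v}) (t := A) (n := k - 1)
    (by simpa using hv) (by simp; omega) (by omega)
  have := hE _ (h D (Finset.mem_powersetCard.mpr ⟨h2, h3⟩))
  rw [Finset.insert_eq_of_mem (by simpa using h1)] at this
  omega

lemma common_ext {V : Type*} [Fintype V] [DecidableEq V] (n k t : ℕ)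
    (hk : 2 ≤ k) (hkt : k ≤ t) (htn : t ≤ n) (hn : Fintype.card V = n)
    (E : Finset (Finset V)) (hE : ∀ e ∈ E, e.card = k)
    (hdeg : ∀ D : Finset V, D.card = k - 1 →
      (1 - 1 / (((t-1).choose (k-1) : ℝ) + ((t-2).choose (k-2) : ℝ))) * n
        < ((E.filter (fun e => D ⊆ e)).card : ℝ))
    (j : ℕ) (hj : j + 1 ≤ t) (A B : Finset V) (hAB : stepRel E k j A B) :
    ∃ v, v ∉ A ∧ v ∉ B ∧ cliqueEdge E k (j+1) (insert v A) ∧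
      cliqueEdge E k (j+1) (insert v B) := by
  obtain ⟨hA, hB, hc⟩ := hAB
  by_cases hjk : k - 1 ≤ j
  · obtain ⟨i, rfl⟩ : ∃ i, j = i + 1 := ⟨j - 1, by omega⟩
    obtain ⟨l, rfl⟩ : ∃ l, k = l + 2 := ⟨k - 2, by omega⟩
    obtain ⟨v, hv⟩ := exists_ext n (l+2) t hk hkt htn hn E hE hdeg
      (A.powersetCard (l+2-1) ∪ B.powersetCard (l+2-1))
      (by
        intro D hD
        rw [Finset.mem_union, Finset.mem_powersetCard, Finset.mem_powersetCard] at hD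
        rcases hD with h | h <;> exact h.2)
      (by
        have h1 := Finset.card_union_add_card_inter (A.powersetCard (l+1)) (B.powersetCard (l+1))
        have h2 : (A ∩ B).powersetCard (l+1) ⊆ A.powersetCard (l+1) ∩ B.powersetCard (l+1) :=
          Finset.subset_inter (Finset.powersetCard_mono Finset.inter_subset_left)
            (Finset.powersetCard_mono Finset.inter_subset_right)
        have h3 := Finset.card_le_card h2
        rw [Finset.card_powersetCard] at h3
        rw [Finset.card_powersetCard, Finset.card_powersetCard, hA.1, hB.1] at h1
        have h4 : i.choose (l+1) ≤ (A ∩ B).card.choose (l+1) := Nat.choose_le_choose _ (by omega)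
        have h5 := Nat.choose_succ_succ i l
        have h6 : (i+1).choose (l+1) ≤ (t-1).choose (l+1) := Nat.choose_le_choose _ (by omega)
        have h7 : i.choose l ≤ (t-2).choose l := Nat.choose_le_choose _ (by omega)
        simp only [Nat.succ_eq_add_one] at h5
        show (A.powersetCard (l+1) ∪ B.powersetCard (l+1)).card
          ≤ (t-1).choose (l+1) + (t-2).choose l
        omega)
    have hvA : ∀ D ∈ A.powersetCard (l+2-1), insert v D ∈ E :=
      fun D hD => hv D (Finset.mem_union_left _ hD)
    have hvB : ∀ D ∈ B.powersetCard (l+2-1), insert v D ∈ E :=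
      fun D hD => hv D (Finset.mem_union_right _ hD)
    have nA := notMem_of_ext (l+2) (i+1) hk hjk E hE A hA.1 v hvA
    have nB := notMem_of_ext (l+2) (i+1) hk hjk E hE B hB.1 v hvB
    exact ⟨v, nA, nB, clique_insert _ _ hk E A hA v nA hvA, clique_insert _ _ hk E B hB v nB hvB⟩
  · have h1 := Finset.card_union_add_card_inter A B
    have h2 : (A ∪ B).card < (Finset.univ : Finset V).card := by
      rw [Finset.card_univ, hn]
      rw [hA.1, hB.1] at h1
      omega
    obtain ⟨v, _, hv⟩ := Finset.exists_mem_notMem_of_card_lt_card h2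
    rw [Finset.mem_union, not_or] at hv
    refine ⟨v, hv.1, hv.2, clique_insert _ _ hk E A hA v hv.1 ?_,
      clique_insert _ _ hk E B hB v hv.2 ?_⟩
    · intro D hD
      rw [Finset.powersetCard_eq_empty.mpr (by rw [hA.1]; omega)] at hD
      simp at hD
    · intro D hD
      rw [Finset.powersetCard_eq_empty.mpr (by rw [hB.1]; omega)] at hD
      simp at hD

lemma conn_all {V : Type*} [Fintype V] [DecidableEq V] (n k t : ℕ)
    (hk : 2 ≤ k) (hkt : k ≤ t) (htn : t ≤ n) (hn : Fintype.card V = n)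
    (E : Finset (Finset V)) (hE : ∀ e ∈ E, e.card = k)
    (hdeg : ∀ D : Finset V, D.card = k - 1 →
      (1 - 1 / (((t-1).choose (k-1) : ℝ) + ((t-2).choose (k-2) : ℝ))) * n
        < ((E.filter (fun e => D ⊆ e)).card : ℝ))
    (j : ℕ) : j ≤ t → ∀ A B, cliqueEdge E k j A → cliqueEdge E k j B →
      Relation.ReflTransGen (stepRel E k j) A B := by
  induction j with
  | zero =>
    intro _ A B hA hB
    have h1 := Finset.card_eq_zero.mp hA.1
    have h2 := Finset.card_eq_zero.mp hB.1
    rw [h1, h2]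
  | succ j ih =>
    intro hj X Y hX hY
    have sub : ∀ X, cliqueEdge E k (j+1) X → ∃ A ⊆ X, cliqueEdge E k j A := by
      intro X hX
      obtain ⟨A, hAX, hA⟩ := Finset.exists_subset_card_eq (s := X) (n := j) (by rw [hX.1]; omega)
      exact ⟨A, hAX, hA, fun S hS hc => hX.2 S (hS.trans hAX) hc⟩
    have one : ∀ X Z C : Finset V, cliqueEdge E k (j+1) X → cliqueEdge E k (j+1) Z → C.card = j →
        C ⊆ X → C ⊆ Z → stepRel E k (j+1) X Z := by
      intro X Z C hX hZ hC h1 h2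
      refine ⟨hX, hZ, ?_⟩
      have := Finset.card_le_card (Finset.subset_inter h1 h2)
      omega
    obtain ⟨A, hAX, hA⟩ := sub X hX
    obtain ⟨B, hBY, hB⟩ := sub Y hY
    have hp := ih (by omega) A B hA hB
    have key : ∀ C, Relation.ReflTransGen (stepRel E k j) A C → ∀ Z, C ⊆ Z →
        cliqueEdge E k (j+1) Z → Relation.ReflTransGen (stepRel E k (j+1)) X Z := by
      intro C hC
      induction hC with
      | refl =>
        intro Z hZ hZc
        exact Relation.ReflTransGen.single (one X Z A hX hZc hA.1 hAX hZ)
      | @tail C D _ hCD ih2 =>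
        intro Z hDZ hZ
        obtain ⟨v, hvC, hvD, cC, cD⟩ :=
          common_ext n k t hk hkt htn hn E hE hdeg j hj C D hCD
        have p1 := ih2 (insert v C) (Finset.subset_insert _ _) cC
        refine (p1.tail (c := insert v D) ⟨cC, cD, ?_⟩).tail
          (one _ _ D cD hZ hCD.2.1.1 (Finset.subset_insert _ _) hDZ)
        rw [← Finset.insert_inter_distrib, Finset.card_insert_of_notMem (by simp [hvC])]
        have := hCD.2.2
        omega
    exact key B hp Y hBY hY

/-- Let `2 ≤ k ≤ t ≤ n` and let `G` be a `k`-graph on `n` vertices with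
minimum codegree `δ(G) > f_k(t)·n`. Then `K_t(G)` is tight-connected: for any two edges
`e, f` of `K_t(G)` there is a finite sequence `e = w 0, w 1, …, w m = f` of edges of `K_t(G)`
such that `|w i ∩ w (i+1)| ≥ t−1` for every `0 ≤ i < m`. -/
theorem stmt_7 {V : Type*} [Fintype V] [DecidableEq V] (n k t : ℕ)
    (hk : 2 ≤ k) (hkt : k ≤ t) (htn : t ≤ n) (hn : Fintype.card V = n)
    (E : Finset (Finset V)) (hE : ∀ e ∈ E, e.card = k)
    (hdeg : ∀ D : Finset V, D.card = k - 1 →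
      (1 - 1 / (((t-1).choose (k-1) : ℝ) + ((t-2).choose (k-2) : ℝ))) * n
        < ((E.filter (fun e => D ⊆ e)).card : ℝ)) :
    ∀ e f : Finset V, cliqueEdge E k t e → cliqueEdge E k t f →
      ∃ (m : ℕ) (w : ℕ → Finset V), w 0 = e ∧ w m = f ∧
        (∀ i ≤ m, cliqueEdge E k t (w i)) ∧
        (∀ i < m, t - 1 ≤ ((w i) ∩ (w (i+1))).card) := by
  intro e f he hf
  have h := conn_all n k t hk hkt htn hn E hE hdeg t le_rfl e f he hf
  clear hf
  induction h with
  | refl =>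
    exact ⟨0, fun _ => e, rfl, rfl, fun _ _ => he, fun i hi => absurd hi (by omega)⟩
  | @tail b c _ hbc ih =>
    obtain ⟨m, w, h0, hm, hc, hs⟩ := ih
    refine ⟨m + 1, fun i => if i ≤ m then w i else c, by simp [h0], by simp, ?_, ?_⟩
    · intro i hi
      by_cases h : i ≤ m
      · simpa [h] using hc i h
      · simpa [h] using hbc.2.1
    · intro i hi
      have him : i ≤ m := by omega
      by_cases h : i + 1 ≤ m
      · simpa [h, him] using hs i h
      · have : i = m := by omega
        subst this
        simpa [hm] using hbc.2.2
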